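/- Priority monotonicity along successor paths: let x and y be canonical tokens with x ∈ P(y), x ≠ y, and x non-atomic. Then the canonical rule of x has strictly higher priority (i.e., strictly smaller index in D) than the canonical rule of y. -/

import Mathlib

/-!
Common BPE formalization preamble.

A token is a (nonempty) string over the alphabet `α`, modeled as `List α`.
A merge rule is a pair of tokens; a dictionary is an ordered list of rules
(earlier rules have strictly higher priority).
-/

namespace BPE

variable {α : Type*} [DecidableEq α]

/-- A token is a string over the alphabet (nonemptiness is imposed by hypotheses). -/
abbrev Token (α : Type*) := List α

/-- A merge rule is an ordered pair of tokens. -/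
abbrev Rule (α : Type*) := Token α × Token α

/-- A dictionary is an ordered list of merge rules; earlier = higher priority. -/
abbrev Dict (α : Type*) := List (Rule α)

/-- Apply a single merge rule to a token list, scanning left to right and replacing
each adjacent occurrence of `r.1` followed by `r.2` by the concatenated token,
resuming the scan after the newly formed token (no overlaps). -/
def applyRule (r : Rule α) : List (Token α) → List (Token α)
  | [] => []
  | [t] => [t]
  | t :: u :: rest =>
      if t = r.1 ∧ u = r.2 then (r.1 ++ r.2) :: applyRule r rest
      else t :: applyRule r (u :: rest)

/-- `φ₀(s)`: the list of single-character tokens of `s`. -/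
def phi0 (s : List α) : List (Token α) := s.map (fun c => [c])

/-- `φ_k(s)`: the token list after applying the first `k` rules of `D` to `s`. -/
def phiK (D : Dict α) (k : ℕ) (s : List α) : List (Token α) :=
  (D.take k).foldl (fun φ r => applyRule r φ) (phi0 s)

/-- The BPE tokenization `𝕋_D(s)`. -/
def tokenize (D : Dict α) (s : List α) : List (Token α) :=
  phiK D D.length s

/-- Detokenization `π`: concatenation of the tokens. -/
def detok (φ : List (Token α)) : List α := φ.flatten

/-- A dictionary is valid if all rule components are genuine (nonempty) tokens. -/
def ValidDict (D : Dict α) : Prop := ∀ r ∈ D, r.1 ≠ [] ∧ r.2 ≠ []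

/-- A token `t` is canonical if `𝕋_D(t) = [t]`. -/
def IsCanonical (D : Dict α) (t : Token α) : Prop := tokenize D t = [t]

/-- The last token `θ(s)`: last element of `𝕋_D(s)` (defaulting to `[]`). -/
def theta (D : Dict α) (s : List α) : Token α := (tokenize D s).getLastD []

/-- `j` (0-based) is the index of the canonical rule of `t`:
`φ_j(t)` has exactly two tokens and `φ_{j+1}(t) = [t]`. -/
def IsCanonicalRuleIdx (D : Dict α) (t : Token α) (j : ℕ) : Prop :=
  j < D.length ∧ (phiK D j t).length = 2 ∧ phiK D (j + 1) t = [t]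

open Classical in
/-- The (0-based) index of the canonical rule of `t` (junk value `0` if none exists). -/
noncomputable def canonIdx (D : Dict α) (t : Token α) : ℕ :=
  if h : ∃ j, IsCanonicalRuleIdx D t j then h.choose else 0

/-- Predecessor `pre(t)`: first token of the two-token stage `φ_{j-1}(t)`. -/
noncomputable def pre (D : Dict α) (t : Token α) : Token α :=
  (phiK D (canonIdx D t) t).headD []

/-- Successor `suc(t)`: second token of the two-token stage `φ_{j-1}(t)`. -/
noncomputable def suc (D : Dict α) (t : Token α) : Token α :=
  (phiK D (canonIdx D t) t).getLastD []

/-- `InPath D x a` means `a ∈ P(x)`: `a` is obtained from `x` by iterating `suc`,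
i.e. `a` lies on the ancestor path of `x` in the Successor Forest. -/
def InPath (D : Dict α) (x a : Token α) : Prop :=
  ∃ n : ℕ, (suc D)^[n] x = a

/-- `s` with the suffix `u` removed. -/
def dropSuffix (s u : List α) : List α := s.take (s.length - u.length)

/-- The Prefix Last-Token Condition of the canonical suffix token `t`
with respect to the string `s`. Atomic tokens satisfy it by definition;
a non-atomic token must satisfy Reachability and Priority dominance. -/
def PLTC (D : Dict α) (s t : Token α) : Prop :=
  t.length = 1 ∨
    (1 < t.length ∧
      InPath D (theta D (dropSuffix s (suc D t))) (pre D t) ∧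
      (theta D (dropSuffix s (suc D t)) ≠ pre D t →
        ∀ u : Token α, 1 < u.length → IsCanonical D u → suc D u = pre D t →
          InPath D (theta D (dropSuffix s (suc D t))) u →
          canonIdx D t < canonIdx D u))


theorem applyRule_split (r : Rule α) (L : List (Token α)) :
    ∀ P S, applyRule r L = P ++ S →
      ∃ A B, L = A ++ B ∧ applyRule r A = P ∧ applyRule r B = S := by
  induction L using applyRule.induct r with
  | case1 =>
    intro P S h
    simp [applyRule] at h
    exact ⟨[], [], by simp [applyRule, h]⟩
  | case2 t =>
    intro P S h
    cases P with
    | nil => exact ⟨[], [t], by simpa [applyRule] using h⟩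
    | cons p P =>
      simp [applyRule] at h
      exact ⟨[t], [], by simp [applyRule, h]⟩
  | case3 t u rest hc ih =>
    intro P S h
    cases P with
    | nil => exact ⟨[], t :: u :: rest, rfl, by simp [applyRule], by simpa using h⟩
    | cons p P =>
      rw [applyRule, if_pos hc] at h
      simp only [List.cons_append, List.cons.injEq] at h
      obtain ⟨A, B, h1, h2, h3⟩ := ih P S h.2
      refine ⟨t :: u :: A, B, by simp [h1], ?_, h3⟩
      rw [applyRule, if_pos hc, h2, h.1]
  | case4 t u rest hc ih =>
    intro P S h
    cases P with
    | nil => exact ⟨[], t :: u :: rest, rfl, by simp [applyRule], by simpa using h⟩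
    | cons p P =>
      rw [applyRule, if_neg hc] at h
      simp only [List.cons_append, List.cons.injEq] at h
      obtain ⟨A, B, h1, h2, h3⟩ := ih P S h.2
      refine ⟨t :: A, B, by simp [h1], ?_, h3⟩
      cases A with
      | nil =>
        simp [applyRule] at h2
        simp [applyRule, h.1, ← h2]
      | cons a A =>
        simp only [List.cons_append, List.cons.injEq] at h1
        rw [applyRule, ← h1.1, if_neg hc, h1.1, h2, h.1]

theorem applyRule_flatten (r : Rule α) (L : List (Token α)) :
    (applyRule r L).flatten = L.flatten := by
  induction L using applyRule.induct r with
  | case1 => simp [applyRule]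
  | case2 t => simp [applyRule]
  | case3 t u rest hc ih => rw [applyRule, if_pos hc]; simp [ih, hc.1, hc.2]
  | case4 t u rest hc ih => rw [applyRule, if_neg hc]; simp [ih]

theorem applyRule_eq_nil (r : Rule α) (L : List (Token α)) (h : applyRule r L = []) : L = [] := by
  cases L with
  | nil => rfl
  | cons a L =>
    cases L with
    | nil => simp [applyRule] at h
    | cons b L =>
      rw [applyRule] at h
      split_ifs at h

theorem applyRule_eq_singleton (r : Rule α) (L : List (Token α)) (t : Token α)
    (h : applyRule r L = [t]) : L = [t] ∨ L.length = 2 := by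
  cases L with
  | nil => simp [applyRule] at h
  | cons a L =>
    cases L with
    | nil => left; simpa [applyRule] using h
    | cons b L =>
      rw [applyRule] at h
      split_ifs at h
      · simp only [List.cons.injEq] at h
        rw [applyRule_eq_nil r L h.2]; simp
      · simp only [List.cons.injEq] at h
        have := applyRule_eq_nil r _ h.2
        simp at this

theorem phiK_zero (D : Dict α) (s : List α) : phiK D 0 s = phi0 s := by simp [phiK]

theorem phiK_succ (D : Dict α) (k : ℕ) (hk : k < D.length) (s : List α) :
    phiK D (k + 1) s = applyRule D[k] (phiK D k s) := by
  unfold phiK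
  rw [← List.take_concat_get' _ _ hk, List.foldl_append]
  rfl

theorem phiK_flatten (D : Dict α) (s : List α) (k : ℕ) (hk : k ≤ D.length) :
    (phiK D k s).flatten = s := by
  induction k with
  | zero =>
    rw [phiK_zero, phi0]
    induction s with
    | nil => rfl
    | cons a s ih => simpa using ih
  | succ k ih => rw [phiK_succ D k hk, applyRule_flatten, ih (by omega)]

theorem phiK_split (D : Dict α) (s : List α) (k : ℕ) (hk : k ≤ D.length) :
    ∀ P S, phiK D k s = P ++ S →
      ∃ u v, s = u ++ v ∧ phiK D k u = P ∧ phiK D k v = S := by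
  induction k with
  | zero =>
    intro P S h
    simp only [phiK_zero, phi0] at h ⊢
    obtain ⟨u, v, h1, h2, h3⟩ := List.map_eq_append_iff.1 h
    exact ⟨u, v, h1, h2, h3⟩
  | succ k ih =>
    intro P S h
    rw [phiK_succ D k hk] at h
    obtain ⟨A, B, h1, h2, h3⟩ := applyRule_split _ _ _ _ h
    obtain ⟨u, v, h4, h5, h6⟩ := ih (by omega) A B h1
    exact ⟨u, v, h4, by rw [phiK_succ D k hk, h5, h2], by rw [phiK_succ D k hk, h6, h3]⟩

theorem phiK_stable (D : Dict α) (s t : List α) (j k : ℕ) (hjk : j ≤ k) (hk : k ≤ D.length)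
    (h : phiK D j s = [t]) : phiK D k s = [t] := by
  induction k, hjk using Nat.le_induction with
  | base => exact h
  | succ k hjk ih => rw [phiK_succ D k hk, ih (by omega), applyRule]

theorem exists_idx (D : Dict α) (t : Token α) (ht : 1 < t.length) (k : ℕ) (hk : k ≤ D.length)
    (h : phiK D k t = [t]) : ∃ j, IsCanonicalRuleIdx D t j := by
  induction k with
  | zero =>
    rw [phiK_zero] at h
    have := congrArg List.length h
    simp [phi0] at this
    omega
  | succ k ih =>
    have h' := h
    rw [phiK_succ D k hk] at h'
    rcases applyRule_eq_singleton _ _ _ h' with h1 | h1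
    · exact ih (by omega) h1
    · exact ⟨k, hk, h1, h⟩

theorem canonIdx_spec (D : Dict α) (t : Token α) (ht : 1 < t.length) (hc : IsCanonical D t) :
    IsCanonicalRuleIdx D t (canonIdx D t) := by
  have h := exists_idx D t ht D.length le_rfl hc
  rw [canonIdx, dif_pos h]
  exact h.choose_spec

theorem atomic_canonIdx (D : Dict α) (t : Token α) (ht : t.length ≤ 1) : canonIdx D t = 0 := by
  rw [canonIdx, dif_neg]
  rintro ⟨j, hj, h2, -⟩
  match t, ht with
  | [], _ =>
    have : ∀ k, k ≤ D.length → phiK D k ([] : List α) = [] := by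
      intro k hk
      induction k with
      | zero => simp [phiK_zero, phi0]
      | succ k ih => rw [phiK_succ D k hk, ih (by omega), applyRule]
    rw [this j hj.le] at h2
    simp at h2
  | [a], _ =>
    have := phiK_stable D [a] [a] 0 j (by omega) hj.le (by simp [phiK_zero, phi0])
    rw [this] at h2
    simp at h2

theorem atomic_suc (D : Dict α) (t : Token α) (ht : t.length ≤ 1) : suc D t = t := by
  rw [suc, atomic_canonIdx D t ht, phiK_zero, phi0]
  match t, ht with
  | [], _ => rfl
  | [a], _ => rfl

theorem suc_stage (D : Dict α) (t : Token α) (ht : 1 < t.length) (hc : IsCanonical D t) :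
    phiK D (canonIdx D t) (suc D t) = [suc D t] := by
  obtain ⟨hj, h2, -⟩ := canonIdx_spec D t ht hc
  obtain ⟨p, s, hps⟩ := List.length_eq_two.1 h2
  have hs : suc D t = s := by rw [suc, hps]; rfl
  obtain ⟨u, v, -, -, hv⟩ := phiK_split D t _ hj.le [p] [s] (by simpa using hps)
  have hf := phiK_flatten D v _ hj.le
  rw [hv] at hf
  have : s = v := by simpa using hf
  subst this
  rw [hs, hv]

theorem suc_canonical (D : Dict α) (t : Token α) (ht : 1 < t.length) (hc : IsCanonical D t) :
    IsCanonical D (suc D t) :=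
  phiK_stable D _ _ _ _ (canonIdx_spec D t ht hc).1.le le_rfl (suc_stage D t ht hc)

theorem canonIdx_suc_lt (D : Dict α) (t : Token α) (ht : 1 < t.length) (hc : IsCanonical D t)
    (hs : 1 < (suc D t).length) : canonIdx D (suc D t) < canonIdx D t := by
  obtain ⟨hj, h2, -⟩ := canonIdx_spec D _ hs (suc_canonical D t ht hc)
  by_contra hlt
  rw [phiK_stable D _ _ _ _ (not_lt.1 hlt) hj.le (suc_stage D t ht hc)] at h2
  simp at h2

theorem iterate_mono (D : Dict α) (x : Token α) (hxl : 1 < x.length) (n : ℕ) :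
    ∀ y, IsCanonical D y → (suc D)^[n] y = x → x ≠ y → canonIdx D x < canonIdx D y := by
  induction n with
  | zero => intro y _ h hne; exact absurd h.symm hne
  | succ n ih =>
    intro y hy h hne
    rw [Function.iterate_succ_apply] at h
    rcases Nat.lt_or_ge 1 y.length with hl | hl
    · by_cases hxs : x = suc D y
      · rw [hxs] at hxl ⊢
        exact canonIdx_suc_lt D y hl hy hxl
      · have h1 := ih _ (suc_canonical D y hl hy) h hxs
        rcases Nat.lt_or_ge 1 (suc D y).length with hs | hs
        · exact h1.trans (canonIdx_suc_lt D y hl hy hs)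
        · rw [atomic_canonIdx D _ hs] at h1
          omega
    · rw [atomic_suc D y hl] at h
      exact ih y hy h hne

/-- **Priority monotonicity along successor paths.** If `x` and `y` are canonical,
`x ∈ P(y)`, `x ≠ y`, and `x` is non-atomic, then the canonical rule of `x` has
strictly higher priority (strictly smaller index) than the canonical rule of `y`. -/
theorem priority_monotonicity [Fintype α] (D : Dict α) (hD : ValidDict D)
    (x y : Token α) (hx : IsCanonical D x) (hy : IsCanonical D y)
    (hpath : InPath D y x) (hne : x ≠ y) (hxl : 1 < x.length) :
    canonIdx D x < canonIdx D y := by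
  obtain ⟨n, hn⟩ := hpath
  exact iterate_mono D x hxl n y hy hn hne

end BPE
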